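/- Let α ∈ [0,1) ∪ [5,∞). Then for every finitely supported function u : ℕ₀ → ℝ with u(0) = 0 one has ∑_{n=1}^∞ |u(n) − u(n−1)|² n^α ≥ ((α−1)²/4) ∑_{n=1}^∞ |u(n)|² n^{α−2}. -/

import Mathlib

/-!
If `φ ≥ 0` satisfies `φ (n + 1) > 0` for all `n`, then completing the square gives
`(y - x)² ≥ (1 - φ n / φ (n + 1)) y² + (1 - φ (n + 1) / φ n) x²`, and summation by parts turns this
into a Hardy inequality whose weight is the discrete `-div (v ∇φ) / φ`. Only the quotients
`r n = φ n / φ (n + 1)` enter.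

For `v n = n ^ α` and `b = (α - 1) / 2` the continuous extremal is `n ^ (-b)`. We replace it by a
Gamma quotient `Γ (n + 1 + θ) / Γ (n + 1 + θ + b)`, which has the same decay but rational quotients
`r n`. The required pointwise bound then compares `(1 + x) ^ (2 * b + 1)`, where `x = 1 / n`, with a
rational function of `x`, and it follows from Bernoulli's inequality for `θ = -1 - b` if
`0 ≤ α < 1`, for `θ = b` if `1 ≤ α ≤ 2` and for `θ = 0` if `2 ≤ α`.
-/

section Supersolution

lemma one_sub_mul_sq_add_one_sub_inv_mul_sq_le {r : ℝ} (hr : 0 < r) (x y : ℝ) :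
    (1 - r) * y ^ 2 + (1 - r⁻¹) * x ^ 2 ≤ (y - x) ^ 2 := by
  have square_completion :
      (y - x) ^ 2 - ((1 - r) * y ^ 2 + (1 - r⁻¹) * x ^ 2) = (r * y - x) ^ 2 / r := by
    field_simp
    ring
  have : 0 ≤ (r * y - x) ^ 2 / r := by positivity
  linarith

variable {u v w r : ℕ → ℝ}

-- The value `r 0 = 0` is allowed: it encodes a supersolution `φ` vanishing at `0`, as `u` does.
lemma sum_range_hardy_of_supersolution (hv : ∀ n, 0 ≤ v n) (hr₀ : 0 ≤ r 0)
    (hr : ∀ n, 0 < r (n + 1))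
    (hw : ∀ n, w n ≤ v n * (1 - r n) + v (n + 1) * (1 - (r (n + 1))⁻¹))
    (hu : u 0 = 0) (N : ℕ) :
    ∑ n ∈ Finset.range N, u (n + 1) ^ 2 * w n + v N * ((r N)⁻¹ - 1) * u N ^ 2 ≤
      ∑ n ∈ Finset.range N, (u (n + 1) - u n) ^ 2 * v n := by
  have picone (n : ℕ) :
      (1 - r n) * u (n + 1) ^ 2 + (1 - (r n)⁻¹) * u n ^ 2 ≤ (u (n + 1) - u n) ^ 2 := by
    cases n with
    | zero =>
      rw [hu]
      nlinarith [mul_nonneg hr₀ (sq_nonneg (u 1))]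
    | succ n => exact one_sub_mul_sq_add_one_sub_inv_mul_sq_le (hr n) _ _
  induction N with
  | zero => simp [hu]
  | succ N ih =>
    rw [Finset.sum_range_succ, Finset.sum_range_succ]
    have weight_bound := mul_le_mul_of_nonneg_left (hw N) (sq_nonneg (u (N + 1)))
    have picone_bound := mul_le_mul_of_nonneg_left (picone N) (hv N)
    linarith

lemma tsum_hardy_of_supersolution (hv : ∀ n, 0 ≤ v n) (hr₀ : 0 ≤ r 0)
    (hr : ∀ n, 0 < r (n + 1))
    (hw : ∀ n, w n ≤ v n * (1 - r n) + v (n + 1) * (1 - (r (n + 1))⁻¹))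
    (hsupp : ∃ N : ℕ, ∀ n ≥ N, u n = 0) (hu : u 0 = 0) :
    ∑' n, u (n + 1) ^ 2 * w n ≤ ∑' n, (u (n + 1) - u n) ^ 2 * v n := by
  obtain ⟨N, hN⟩ := hsupp
  have hN_succ {n : ℕ} (hn : n ∉ Finset.range N) : u n = 0 ∧ u (n + 1) = 0 := by
    have hn : N ≤ n := by simpa using hn
    exact ⟨hN n hn, hN (n + 1) (by lia)⟩
  rw [tsum_eq_sum (s := Finset.range N) fun n hn ↦ by simp [hN_succ hn],
    tsum_eq_sum (s := Finset.range N) fun n hn ↦ by simp [hN_succ hn]]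
  simpa [hN N le_rfl] using sum_range_hardy_of_supersolution hv hr₀ hr hw hu N

end Supersolution

section Bernoulli

variable {b x : ℝ}

lemma one_add_rpow_le_one_div_add (hb₀ : -(1 / 2) ≤ b) (hb : b < 0) (hx₀ : 0 ≤ x) (hx : x ≤ 1) :
    (1 + x) ^ (2 * b + 1) ≤ 1 / (1 + (-1 - b) * x) + b * x := by
  have denom_pos : 0 < 1 + (-1 - b) * x := by nlinarith
  have geometric : 1 + (1 + b) * x ≤ 1 / (1 + (-1 - b) * x) := by
    rw [le_div_iff₀ denom_pos]
    nlinarith [sq_nonneg ((1 + b) * x)]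
  have bernoulli : (1 + x) ^ (2 * b + 1) ≤ 1 + (2 * b + 1) * x :=
    rpow_one_add_le_one_add_mul_self (by linarith) (by linarith) (by linarith)
  linarith

lemma one_add_div_le_one_add_rpow {p : ℝ} (hp₀ : 0 ≤ p) (hp : p ≤ 1) (hx : 0 ≤ x) :
    (1 + x) / (1 + (1 - p) * x) ≤ (1 + x) ^ p := by
  have hx' : 0 < 1 + x := by linarith
  have denom_pos : 0 < 1 + (1 - p) * x := by nlinarith
  have bernoulli : (1 + x) ^ (1 - p) ≤ 1 + (1 - p) * x :=
    rpow_one_add_le_one_add_mul_self (by linarith) (by linarith) (by linarith)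
  rw [div_le_iff₀ denom_pos]
  calc 1 + x = (1 + x) ^ p * (1 + x) ^ (1 - p) := by
        rw [← Real.rpow_add hx', add_sub_cancel, Real.rpow_one]
    _ ≤ (1 + x) ^ p * (1 + (1 - p) * x) := by gcongr

lemma one_div_add_mul_le_one_add_rpow (hb₀ : 0 ≤ b) (hb : b ≤ 1 / 2) (hx₀ : 0 ≤ x) (hx : x ≤ 1) :
    (1 / (1 + b * x) + b * x) * (1 + (1 + b + b) * x) ≤ (1 + x) ^ (2 * b + 1) := by
  have hx' : 0 < 1 + x := by linarith
  have denom_pos : 0 < 1 + (1 - 2 * b) * x := by nlinarith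
  have hbx : 0 ≤ b * x := by positivity
  have sq_le_four : (1 + x) ^ 2 ≤ 4 * (1 + b * x + (b * x) ^ 2) := by nlinarith
  calc (1 / (1 + b * x) + b * x) * (1 + (1 + b + b) * x)
      ≤ (1 + x) / (1 + (1 - 2 * b) * x) * (1 + x) := by
        rw [div_add' _ _ _ (by positivity), div_mul_eq_mul_div, div_mul_eq_mul_div,
          div_le_div_iff₀ (by positivity) denom_pos]
        linarith [mul_le_mul_of_nonneg_left sq_le_four (sq_nonneg (b * x))]
    _ ≤ (1 + x) ^ (2 * b) * (1 + x) := by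
        gcongr
        exact one_add_div_le_one_add_rpow (by linarith) (by linarith) hx₀
    _ = (1 + x) ^ (2 * b + 1) := by rw [Real.rpow_add_one hx'.ne']

lemma one_add_mul_mul_one_add_mul_le_one_add_rpow (hb : 1 / 2 ≤ b) (hx : 0 ≤ x) :
    (1 + b * x) * (1 + (1 + b) * x) ≤ (1 + x) ^ (2 * b + 1) := by
  have bernoulli : 1 + (b + 1 / 2) * x ≤ (1 + x) ^ (b + 1 / 2) :=
    one_add_mul_self_le_rpow_one_add (by linarith) (by linarith)
  calc (1 + b * x) * (1 + (1 + b) * x) ≤ (1 + (b + 1 / 2) * x) ^ 2 := by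
        nlinarith [sq_nonneg x]
    _ ≤ ((1 + x) ^ (b + 1 / 2)) ^ 2 := by gcongr
    _ = (1 + x) ^ (2 * b + 1) := by
        rw [← Real.rpow_mul_natCast (by linarith)]
        congr 1
        push_cast
        ring

end Bernoulli

section PowerWeight

/-- The quotient `φ n / φ (n + 1)` of consecutive values of the trial function
`φ n = Γ (n + 1 + θ) / Γ (n + 1 + θ + b)`, which decays like `n ^ (-b)`. The Hardy argument only
sees these quotients, so `φ` itself is not defined. -/
noncomputable def trialRatio (b θ : ℝ) (n : ℕ) : ℝ :=
  (n + 1 + θ + b) / (n + 1 + θ)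

variable {b θ : ℝ}

lemma trialRatio_zero_nonneg (hθ : -1 < θ) (hθb : -1 ≤ θ + b) : 0 ≤ trialRatio b θ 0 := by
  rw [trialRatio, Nat.cast_zero]
  exact div_nonneg (by linarith) (by linarith)

lemma trialRatio_succ_pos (hθ : -1 < θ) (hθb : -1 ≤ θ + b) (n : ℕ) :
    0 < trialRatio b θ (n + 1) := by
  rw [trialRatio, Nat.cast_succ]
  exact div_pos (by linarith [n.cast_nonneg (α := ℝ)]) (by linarith [n.cast_nonneg (α := ℝ)])

lemma one_sub_trialRatio (hθ : -1 < θ) (n : ℕ) :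
    1 - trialRatio b θ n = -b / (n + 1 + θ) := by
  have hn : (n : ℝ) + 1 + θ ≠ 0 := by linarith [n.cast_nonneg (α := ℝ)]
  rw [trialRatio]
  field_simp
  ring

lemma one_sub_inv_trialRatio_succ (hθb : -1 ≤ θ + b) (n : ℕ) :
    1 - (trialRatio b θ (n + 1))⁻¹ = b / (n + 1 + 1 + θ + b) := by
  have hn : (n : ℝ) + 1 + 1 + θ + b ≠ 0 := by linarith [n.cast_nonneg (α := ℝ)]
  rw [trialRatio, inv_div, Nat.cast_succ]
  field_simp
  ring

/-- A shift `θ` for which `trialRatio b θ` comes from a supersolution of the Hardy inequality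
with weight `n ^ (2 * b + 1)` and constant `b ^ 2`; the variable `x` stands for `1 / n`.
The factor `b` is kept in `bound` because its sign decides the direction of the comparison. -/
structure IsAdmissibleShift (b θ : ℝ) : Prop where
  neg_one_lt : -1 < θ
  neg_one_le_add : -1 ≤ θ + b
  bound : ∀ x ∈ Set.Ioc (0 : ℝ) 1,
    b * ((1 / (1 + θ * x) + b * x) * (1 + (1 + θ + b) * x)) ≤ b * (1 + x) ^ (2 * b + 1)

lemma isAdmissibleShift_neg_one_sub (hb₀ : -(1 / 2) ≤ b) (hb : b < 0) :
    IsAdmissibleShift b (-1 - b) where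
  neg_one_lt := by linarith
  neg_one_le_add := by linarith
  bound x hx := by
    have numerator : 1 + (1 + (-1 - b) + b) * x = 1 := by ring
    rw [numerator, mul_one]
    exact mul_le_mul_of_nonpos_left (one_add_rpow_le_one_div_add hb₀ hb hx.1.le hx.2) hb.le

lemma isAdmissibleShift_self (hb₀ : 0 ≤ b) (hb : b ≤ 1 / 2) : IsAdmissibleShift b b where
  neg_one_lt := by linarith
  neg_one_le_add := by linarith
  bound _ hx := mul_le_mul_of_nonneg_left
    (one_div_add_mul_le_one_add_rpow hb₀ hb hx.1.le hx.2) hb₀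

lemma isAdmissibleShift_zero (hb : 1 / 2 ≤ b) : IsAdmissibleShift b 0 where
  neg_one_lt := by linarith
  neg_one_le_add := by linarith
  bound x hx := by
    have hb₀ : 0 ≤ b := by linarith
    simpa using mul_le_mul_of_nonneg_left
      (one_add_mul_mul_one_add_mul_le_one_add_rpow hb hx.1.le) hb₀

lemma exists_isAdmissibleShift (hb : -(1 / 2) ≤ b) : ∃ θ, IsAdmissibleShift b θ := by
  rcases lt_or_ge b 0 with hb_neg | hb_nonneg
  · exact ⟨-1 - b, isAdmissibleShift_neg_one_sub hb hb_neg⟩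
  rcases le_total b (1 / 2) with hb_le | hb_ge
  · exact ⟨b, isAdmissibleShift_self hb_nonneg hb_le⟩
  · exact ⟨0, isAdmissibleShift_zero hb_ge⟩

namespace IsAdmissibleShift

lemma sq_div_sq_le (h : IsAdmissibleShift b θ) {m : ℝ} (hm : 1 ≤ m) :
    b ^ 2 / m ^ 2 ≤ -b / (m + θ) + (1 + 1 / m) ^ (2 * b + 1) * (b / (m + 1 + θ + b)) := by
  have hm₀ : 0 < m := by linarith
  have hmθ : 0 < m + θ := by linarith [h.neg_one_lt]
  have hmθb : 0 < m + 1 + θ + b := by linarith [h.neg_one_le_add]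
  have bound := h.bound (1 / m) ⟨by positivity, (div_le_one hm₀).2 hm⟩
  have factor_left : 1 / (1 + θ * (1 / m)) + b * (1 / m) = m / (m + θ) + b / m := by
    field_simp
  have factor_right : 1 + (1 + θ + b) * (1 / m) = (m + 1 + θ + b) / m := by
    field_simp
    ring
  rw [factor_left, factor_right] at bound
  have scaled_bound := mul_le_mul_of_nonneg_right bound (inv_nonneg.2 hmθb.le)
  have cancel : b * ((m / (m + θ) + b / m) * ((m + 1 + θ + b) / m)) * (m + 1 + θ + b)⁻¹ =
      b / (m + θ) + b ^ 2 / m ^ 2 := by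
    field_simp
  rw [cancel] at scaled_bound
  rw [neg_div, mul_div_assoc', div_eq_mul_inv _ (m + 1 + θ + b)]
  linarith

lemma sq_mul_rpow_le (h : IsAdmissibleShift b θ) (n : ℕ) :
    b ^ 2 * ((n : ℝ) + 1) ^ (2 * b - 1) ≤
      ((n : ℝ) + 1) ^ (2 * b + 1) * (1 - trialRatio b θ n) +
        (((n + 1 : ℕ) : ℝ) + 1) ^ (2 * b + 1) * (1 - (trialRatio b θ (n + 1))⁻¹) := by
  have hm : (0 : ℝ) < n + 1 := by positivity
  have weight_succ : (((n + 1 : ℕ) : ℝ) + 1) ^ (2 * b + 1) =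
      ((n : ℝ) + 1) ^ (2 * b + 1) * (1 + 1 / ((n : ℝ) + 1)) ^ (2 * b + 1) := by
    rw [← Real.mul_rpow hm.le (by positivity), mul_add, mul_one_div_cancel hm.ne', mul_one,
      Nat.cast_succ]
  have weight_sub_two :
      ((n : ℝ) + 1) ^ (2 * b - 1) = ((n : ℝ) + 1) ^ (2 * b + 1) / ((n : ℝ) + 1) ^ 2 := by
    rw [show 2 * b - 1 = 2 * b + 1 - 2 by ring, Real.rpow_sub hm, Real.rpow_two]
  have scaled_bound := mul_le_mul_of_nonneg_left (h.sq_div_sq_le (m := n + 1) (by simp))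
    (Real.rpow_nonneg hm.le (2 * b + 1))
  rwa [one_sub_trialRatio h.neg_one_lt, one_sub_inv_trialRatio_succ h.neg_one_le_add,
    weight_succ, weight_sub_two, mul_assoc, ← mul_add, mul_div_left_comm]

end IsAdmissibleShift

end PowerWeight

theorem discrete_weighted_hardy_power_weight_general {α : ℝ} (hα : 0 ≤ α)
    {u : ℕ → ℝ} (hsupp : ∃ N : ℕ, ∀ n ≥ N, u n = 0) (h0 : u 0 = 0) :
    (α - 1) ^ 2 / 4 * ∑' n : ℕ, |u (n + 1)| ^ 2 * ((n : ℝ) + 1) ^ (α - 2) ≤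
      ∑' n : ℕ, |u (n + 1) - u n| ^ 2 * ((n : ℝ) + 1) ^ α := by
  obtain ⟨b, rfl⟩ : ∃ b, α = 2 * b + 1 := ⟨(α - 1) / 2, by ring⟩
  obtain ⟨θ, hθ⟩ := exists_isAdmissibleShift (b := b) (by linarith)
  have hardy := tsum_hardy_of_supersolution (v := fun n ↦ ((n : ℝ) + 1) ^ (2 * b + 1))
    (fun n ↦ by positivity) (trialRatio_zero_nonneg hθ.neg_one_lt hθ.neg_one_le_add)
    (trialRatio_succ_pos hθ.neg_one_lt hθ.neg_one_le_add) hθ.sq_mul_rpow_le hsupp h0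
  have constant : (2 * b + 1 - 1) ^ 2 / 4 = b ^ 2 := by ring
  have exponent : 2 * b + 1 - 2 = 2 * b - 1 := by ring
  simpa only [sq_abs, constant, exponent, ← tsum_mul_left, mul_left_comm (b ^ 2)] using hardy

/-- Corollary 2.3: weighted discrete Hardy inequality with power weight `n^α`. -/
theorem discrete_weighted_hardy_power_weight (α : ℝ)
    (hα : α ∈ Set.Ico (0 : ℝ) 1 ∪ Set.Ici (5 : ℝ))
    (u : ℕ → ℝ) (hsupp : ∃ N : ℕ, ∀ n ≥ N, u n = 0) (h0 : u 0 = 0) :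
    ∑' n : ℕ, |u (n + 1) - u n| ^ 2 * ((n : ℝ) + 1) ^ α ≥
      (α - 1) ^ 2 / 4 * ∑' n : ℕ, |u (n + 1)| ^ 2 * ((n : ℝ) + 1) ^ (α - 2) :=
  discrete_weighted_hardy_power_weight_general
    (hα.elim (fun h ↦ h.1) fun h ↦ le_trans (by norm_num) h) hsupp h0
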